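/- arXiv:2212.03786 — 4 statements merged into one kernel-verified Lean document; each statement's English description precedes it below -/
import Mathlib

section
/- Let Σ be a finite alphabet, let d ≥ 1, and let L₁ and L₂ be languages over Σ with L₁ ≠ L₂. Suppose that for every n ≥ 0 the symmetric difference (L₁ △ L₂) contains strictly fewer than 2^(d-1) words of length n. Then L₁ and L₂ are not d-similar; that is, there exist an n ≥ 0 and an assignment X of d×d real matrices to the letters of Σ such that the sum of the matrix products ∏X(w) over the words w of length n in L₁ differs from the corresponding sum over the words of length n in L₂. -/
/-!
The difference of the two slice sums is the value of a noncommutative polynomial `f` with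
coefficients `±1`, so it suffices that a nonzero noncommutative polynomial with fewer than `2 ^ d`
monomials is not an identity of `d × d` matrices.

Write `f = u g` with `u` the longest common prefix of the monomials of `f`. If `g` has a nonzero
constant term, then substituting an indeterminate `t` for all letters does not kill `f`, and over an
infinite domain neither does some specialization of `t`. Otherwise the monomials of `g` have at
least two first letters, so for some letter `a` the polynomial `g_a` in `g = ∑ a, a g_a` is nonzero
and has fewer than `2 ^ (d - 1)` monomials. By induction `g_a` does not vanish at some
`(d - 1) × (d - 1)` matrices `X b`. Bordering these by a new row that has `t` on the diagonal, and a
`1` elsewhere only for the letter `a`, yields `d × d` matrices at which an entry of the value of `f`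
is a polynomial in `t` whose coefficient at `t ^ |u|` is an entry of `g_a(X)`.
-/

open Polynomial

section WordEval

variable {α R A B : Type*} [CommSemiring R] [Semiring A] [Algebra R A] [Semiring B] [Algebra R B]

/-- The value of a noncommutative polynomial, encoded by its coefficients on words, under the
substitution `X` of elements of an `R`-algebra for the letters. -/
noncomputable def wordEval (X : α → A) : (List α →₀ R) →ₗ[R] A :=
  Finsupp.linearCombination R fun w ↦ (w.map X).prod

@[simp]
theorem wordEval_single (X : α → A) (w : List α) (c : R) :
    wordEval X (Finsupp.single w c) = c • (w.map X).prod :=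
  Finsupp.linearCombination_single R c w

theorem map_wordEval (φ : A →ₐ[R] B) (X : α → A) (f : List α →₀ R) :
    φ (wordEval X f) = wordEval (φ ∘ X) f := by
  simp [wordEval, Finsupp.linearCombination_apply, map_finsuppSum, map_list_prod]

/-- The noncommutative polynomial `f` is a polynomial identity of the algebra `A`: it vanishes under
every substitution of elements of `A` for the letters. -/
def IsPolynomialIdentity (A : Type*) [Semiring A] [Algebra R A] (f : List α →₀ R) : Prop :=
  ∀ X : α → A, wordEval X f = 0

theorem IsPolynomialIdentity.of_injective {f : List α →₀ R} (hf : IsPolynomialIdentity B f)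
    (φ : A →ₐ[R] B) (hφ : Function.Injective φ) : IsPolynomialIdentity A f := fun X ↦
  hφ <| by rw [map_wordEval, hf, map_zero]

theorem coeff_wordEval_X (u : List α) (f : List α →₀ R) :
    (wordEval (fun _ ↦ Polynomial.X) (f.mapDomain (u ++ ·)) : R[X]).coeff u.length = f [] := by
  induction f using Finsupp.induction_linear with
  | zero => simp
  | add f g hf hg => simp [Finsupp.mapDomain_add, hf, hg]
  | single v c => simp [Finsupp.mapDomain_single, Finsupp.single_apply, coeff_X_pow]

end WordEval

section LeftQuotient

variable {α R : Type*} [Semiring R]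

/-- The left quotient `f_a` of a noncommutative polynomial `f` by the letter `a`, so that
`f = f(0) + ∑ a, a f_a`. -/
noncomputable def leftQuotient (a : α) : (List α →₀ R) →ₗ[R] (List α →₀ R) :=
  Finsupp.lcomapDomain (a :: ·) List.cons_injective

@[simp]
theorem leftQuotient_apply (a : α) (f : List α →₀ R) (w : List α) :
    leftQuotient a f w = f (a :: w) :=
  rfl

@[simp]
theorem leftQuotient_single_nil (a : α) (c : R) :
    leftQuotient a (Finsupp.single [] c) = 0 := by
  ext w
  simp

@[simp]
theorem leftQuotient_single_cons [DecidableEq α] (a b : α) (w : List α) (c : R) :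
    leftQuotient a (Finsupp.single (b :: w) c) = if b = a then Finsupp.single w c else 0 := by
  ext v
  by_cases hba : b = a <;> simp [Finsupp.single_apply, hba]

theorem mapDomain_cons_leftQuotient {a : α} {f : List α →₀ R} (hnil : f [] = 0)
    (hcons : ∀ b ≠ a, leftQuotient b f = 0) :
    (leftQuotient a f).mapDomain (a :: ·) = f := by
  refine Finsupp.mapDomain_comapDomain _ List.cons_injective f fun w hw ↦ ?_
  rw [Finset.mem_coe, Finsupp.mem_support_iff] at hw
  cases w with
  | nil => exact absurd hnil hw
  | cons b w =>
    have hba : b = a := by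
      by_contra hba
      exact hw (DFunLike.congr_fun (hcons b hba) w)
    exact ⟨w, by rw [hba]⟩

theorem exists_eq_mapDomain_append {f : List α →₀ R} (hf : f ≠ 0) :
    ∃ (u : List α) (g : List α →₀ R), f = g.mapDomain (u ++ ·) ∧
      (g [] ≠ 0 ∨ ∃ a b, a ≠ b ∧ leftQuotient a g ≠ 0 ∧ leftQuotient b g ≠ 0) := by
  obtain ⟨w, hw⟩ := Finsupp.ne_iff.mp hf
  clear hf
  induction w generalizing f with
  | nil => exact ⟨[], f, Finsupp.mapDomain_id.symm, .inl hw⟩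
  | cons a w ih =>
    by_cases hsplit : f [] ≠ 0 ∨ ∃ b, b ≠ a ∧ leftQuotient b f ≠ 0
    · refine ⟨[], f, Finsupp.mapDomain_id.symm, hsplit.imp_right ?_⟩
      rintro ⟨b, hba, hb⟩
      exact ⟨b, a, hba, hb, Finsupp.ne_iff.mpr ⟨w, hw⟩⟩
    · push Not at hsplit
      obtain ⟨u, g, hg, hgsplit⟩ := ih (f := leftQuotient a f) hw
      refine ⟨a :: u, g, ?_, hgsplit⟩
      rw [← mapDomain_cons_leftQuotient hsplit.1 hsplit.2, hg, ← Finsupp.mapDomain_comp]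
      rfl

theorem card_support_leftQuotient_add_le {a b : α} (hab : a ≠ b) (f : List α →₀ R) :
    (leftQuotient a f).support.card + (leftQuotient b f).support.card ≤ f.support.card := by
  classical
  rw [← Finset.card_image_of_injective (leftQuotient a f).support (List.cons_injective (a := a)),
    ← Finset.card_image_of_injective (leftQuotient b f).support (List.cons_injective (a := b)),
    ← Finset.card_union_of_disjoint]
  · refine Finset.card_le_card fun w hw ↦ ?_
    simp only [Finset.mem_union, Finset.mem_image, Finsupp.mem_support_iff] at hw
    obtain ⟨v, hv, rfl⟩ | ⟨v, hv, rfl⟩ := hw <;> exact Finsupp.mem_support_iff.mpr hv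
  · simp only [Finset.disjoint_left, Finset.mem_image]
    rintro _ ⟨v, -, rfl⟩ ⟨v', -, h⟩
    exact hab (List.cons.inj h).1.symm

theorem exists_leftQuotient_ne_zero_card_support_lt {f : List α →₀ R} {a b : α} {n : ℕ}
    (hab : a ≠ b) (ha : leftQuotient a f ≠ 0) (hb : leftQuotient b f ≠ 0)
    (hcard : f.support.card < 2 * n) :
    ∃ c, leftQuotient c f ≠ 0 ∧ (leftQuotient c f).support.card < n := by
  have hadd := card_support_leftQuotient_add_le hab f
  by_cases han : (leftQuotient a f).support.card < n
  · exact ⟨a, ha, han⟩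
  · exact ⟨b, hb, by lia⟩

end LeftQuotient

section Border

variable {α m R : Type*} [DecidableEq α] [Fintype m] [DecidableEq m] [CommSemiring R]

/-- The matrices `X b` bordered by a new first row and column. The new row has the indeterminate on
the diagonal and, for the letter `a` only, an additional `1` in column `r`. -/
noncomputable def borderMatrix (X : α → Matrix m m R) (a : α) (r : m) (b : α) :
    Matrix (Unit ⊕ m) (Unit ⊕ m) R[X] :=
  Matrix.fromBlocks (Matrix.of fun _ _ ↦ Polynomial.X)
    (Matrix.of fun _ j ↦ if b = a ∧ r = j then 1 else 0) 0 ((X b).map C)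

theorem prod_borderMatrix_inr_inr (X : α → Matrix m m R) (a : α) (r : m) (w : List α) (i j : m) :
    (w.map (borderMatrix X a r)).prod (.inr i) (.inr j) = C ((w.map X).prod i j) := by
  induction w generalizing i with
  | nil => simp [Matrix.one_apply, apply_ite C]
  | cons b w ih => simp [Matrix.mul_apply, borderMatrix, ← ih]

theorem prod_borderMatrix_cons_inl_inr (X : α → Matrix m m R) (a b : α) (r s : m) (w : List α) :
    ((b :: w).map (borderMatrix X a r)).prod (.inl ()) (.inr s) =
      Polynomial.X * (w.map (borderMatrix X a r)).prod (.inl ()) (.inr s) +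
        if b = a then C ((w.map X).prod r s) else 0 := by
  by_cases hba : b = a <;>
    simp [Matrix.mul_apply, borderMatrix, hba, ← prod_borderMatrix_inr_inr X a r]

theorem coeff_prod_borderMatrix_append (X : α → Matrix m m R) (a : α) (r s : m) (u v : List α) :
    (((u ++ v).map (borderMatrix X a r)).prod (.inl ()) (.inr s)).coeff u.length =
      wordEval X (leftQuotient a (Finsupp.single v (1 : R))) r s := by
  induction u with
  | nil =>
    cases v with
    | nil => simp
    | cons b v =>
      rw [List.nil_append, prod_borderMatrix_cons_inl_inr]
      by_cases hba : b = a <;> simp [hba]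
  | cons b u ih =>
    rw [List.cons_append, prod_borderMatrix_cons_inl_inr, List.length_cons, coeff_add,
      coeff_X_mul, ih]
    by_cases hba : b = a <;> simp [hba]

theorem coeff_wordEval_borderMatrix (X : α → Matrix m m R) (a : α) (r s : m) (u : List α)
    (f : List α →₀ R) :
    (wordEval (borderMatrix X a r) (f.mapDomain (u ++ ·)) (.inl ()) (.inr s)).coeff u.length =
      wordEval X (leftQuotient a f) r s := by
  induction f using Finsupp.induction_linear with
  | zero => simp
  | add f g hf hg => simp [Finsupp.mapDomain_add, hf, hg]
  | single v c =>
    rw [← Finsupp.smul_single_one v c, Finsupp.mapDomain_smul, Finsupp.mapDomain_single]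
    simp only [map_smul, Matrix.smul_apply, coeff_smul, wordEval_single, one_smul]
    rw [coeff_prod_borderMatrix_append]

end Border

namespace IsPolynomialIdentity

section CommSemiring

variable {α R : Type*} [CommSemiring R] {f : List α →₀ R} {u : List α}

theorem matrix_leftQuotient {m : Type*} [Fintype m] [DecidableEq m]
    (hf : IsPolynomialIdentity (Matrix (Unit ⊕ m) (Unit ⊕ m) R[X]) (f.mapDomain (u ++ ·)))
    (a : α) : IsPolynomialIdentity (Matrix m m R) (leftQuotient a f) := by
  classical
  intro X
  ext r s
  rw [← coeff_wordEval_borderMatrix X a r s u f, hf]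
  simp

theorem apply_nil_eq_zero (hf : IsPolynomialIdentity R[X] (f.mapDomain (u ++ ·))) :
    f [] = 0 := by
  rw [← coeff_wordEval_X u, hf, coeff_zero]

end CommSemiring

variable {α R : Type*} [CommRing R] [IsDomain R] [Infinite R]

theorem matrix_polynomial {m : Type*} [Fintype m] [DecidableEq m] {f : List α →₀ R}
    (hf : IsPolynomialIdentity (Matrix m m R) f) : IsPolynomialIdentity (Matrix m m R[X]) f := by
  intro X
  ext1 i j
  refine Polynomial.funext fun t ↦ ?_
  have ht : (aeval t).mapMatrix (wordEval X f) = (0 : Matrix m m R) := by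
    rw [map_wordEval, hf]
  simpa using congr_fun₂ ht i j

theorem eq_zero_of_card_support_lt {d : ℕ} {f : List α →₀ R}
    (hf : IsPolynomialIdentity (Matrix (Fin d) (Fin d) R) f) (hcard : f.support.card < 2 ^ d) :
    f = 0 := by
  induction d generalizing f with
  | zero => simpa using hcard
  | succ d ih =>
    by_contra hne
    have hpoly := hf.matrix_polynomial
    obtain ⟨u, g, rfl, hnil | ⟨a, b, hab, ha, hb⟩⟩ := exists_eq_mapDomain_append hne
    · exact hnil <| apply_nil_eq_zero <|
        hpoly.of_injective (Matrix.scalarAlgHom (Fin (d + 1)) R)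
          fun _ _ ↦ Matrix.scalar_inj.mp
    · classical
      rw [Finsupp.mapDomain_support_of_injective (List.append_right_injective u),
        Finset.card_image_of_injective _ (List.append_right_injective u), pow_succ'] at hcard
      obtain ⟨c, hc, hc_card⟩ := exists_leftQuotient_ne_zero_card_support_lt hab ha hb hcard
      let e : Unit ⊕ Fin d ≃ Fin (d + 1) := Fintype.equivOfCardEq (by simp [add_comm])
      let E := Matrix.reindexAlgEquiv R R[X] e
      exact hc (ih ((hpoly.of_injective E.toAlgHom E.injective).matrix_leftQuotient c) hc_card)

end IsPolynomialIdentity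

section Languages

variable {α R : Type*} [CommRing R] [IsDomain R] [Infinite R]

theorem exists_sum_prod_ne_of_card_symmDiff_lt [DecidableEq α] {d : ℕ} {S T : Finset (List α)}
    (hne : S ≠ T) (hcard : (symmDiff S T).card < 2 ^ d) :
    ∃ X : α → Matrix (Fin d) (Fin d) R,
      ∑ w ∈ S, (w.map X).prod ≠ ∑ w ∈ T, (w.map X).prod := by
  let f : List α →₀ R := ∑ w ∈ S, Finsupp.single w 1 - ∑ w ∈ T, Finsupp.single w 1
  have hf_apply (w : List α) : f w = (if w ∈ S then 1 else 0) - (if w ∈ T then 1 else 0) := by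
    simp [f, Finsupp.single_apply]
  have hf_support : f.support = symmDiff S T := by
    ext w
    by_cases hS : w ∈ S <;> by_cases hT : w ∈ T <;> simp [Finset.mem_symmDiff, hf_apply, hS, hT]
  have hf : f ≠ 0 := by
    rwa [← Finsupp.support_nonempty_iff, hf_support, Finset.symmDiff_nonempty]
  by_contra! hsum
  refine hf (IsPolynomialIdentity.eq_zero_of_card_support_lt (d := d) (fun X ↦ ?_) ?_)
  · simp [f, hsum X]
  · rwa [hf_support]

theorem not_d_similar_of_small_symmDiff_general (d : ℕ) (L₁ L₂ : Set (List α)) (hne : L₁ ≠ L₂)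
    (hfin₁ : ∀ n : ℕ, {w ∈ L₁ | w.length = n}.Finite)
    (hfin₂ : ∀ n : ℕ, {w ∈ L₂ | w.length = n}.Finite)
    (hsmall : ∀ n : ℕ, {w ∈ symmDiff L₁ L₂ | w.length = n}.ncard < 2 ^ d) :
    ∃ (n : ℕ) (X : α → Matrix (Fin d) (Fin d) R),
      (∑ᶠ w ∈ {w ∈ L₁ | w.length = n}, (w.map X).prod) ≠
      (∑ᶠ w ∈ {w ∈ L₂ | w.length = n}, (w.map X).prod) := by
  classical
  obtain ⟨w₀, hw₀⟩ := Set.symmDiff_nonempty.mpr hne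
  let n := w₀.length
  let S := (hfin₁ n).toFinset
  let T := (hfin₂ n).toFinset
  have hsymm : (symmDiff S T : Set (List α)) = {w ∈ symmDiff L₁ L₂ | w.length = n} := by
    ext w
    simp only [S, T, Set.Finite.coe_toFinset, Set.mem_symmDiff, Set.mem_ofPred_eq]
    tauto
  rw [← Finset.coe_symmDiff] at hsymm
  have hne_slices : S ≠ T := by
    rw [← Finset.symmDiff_nonempty, ← Finset.coe_nonempty, hsymm]
    exact ⟨w₀, hw₀, rfl⟩
  have hcard : (symmDiff S T).card < 2 ^ d := by
    rw [← Set.ncard_coe_finset, hsymm]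
    exact hsmall n
  obtain ⟨X, hX⟩ := exists_sum_prod_ne_of_card_symmDiff_lt (R := R) hne_slices hcard
  refine ⟨n, X, ?_⟩
  rwa [finsum_mem_eq_finite_toFinset_sum _ (hfin₁ n), finsum_mem_eq_finite_toFinset_sum _ (hfin₂ n)]

end Languages

/-- **Theorem (languages that are too close are not d-similar).**
If `L₁ ≠ L₂` are languages over a finite alphabet `α` and every length-`n` slice of the
symmetric difference `L₁ △ L₂` has fewer than `2^(d-1)` words, then `L₁` and `L₂` are not
`d`-similar: some assignment of `d×d` real matrices to the letters distinguishes some slice. -/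
theorem not_d_similar_of_small_symmDiff
    {α : Type*} [Fintype α] (d : ℕ) (hd : 1 ≤ d)
    (L₁ L₂ : Set (List α)) (hne : L₁ ≠ L₂)
    (hsmall : ∀ n : ℕ, ({w ∈ symmDiff L₁ L₂ | w.length = n}).ncard < 2 ^ (d - 1)) :
    ∃ (n : ℕ) (X : α → Matrix (Fin d) (Fin d) ℝ),
      (∑ᶠ w ∈ {w ∈ L₁ | w.length = n}, (w.map X).prod) ≠
      (∑ᶠ w ∈ {w ∈ L₂ | w.length = n}, (w.map X).prod) :=
  not_d_similar_of_small_symmDiff_general d L₁ L₂ hne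
    (fun n ↦ (List.finite_length_eq α n).subset fun _ hw ↦ hw.2)
    (fun n ↦ (List.finite_length_eq α n).subset fun _ hw ↦ hw.2)
    fun n ↦ (hsmall n).trans_le (Nat.pow_le_pow_right two_pos d.pred_le)
end

section
/- (Amitsur–Levitsky theorem.) Let R be a commutative ring, let d ≥ 1, and let X₁, X₂, …, X_{2d} be d×d matrices over R. Then the sum over all permutations σ of {1, …, 2d} of (sign σ) · X_{σ(1)} · X_{σ(2)} · … · X_{σ(2d)} equals the zero matrix. -/
/-!
Rosset's argument. If `e` is a basis of `Kᵏ`, then in `⋀ Kᵏ ⊗ Matₙ(K) = Matₙ(⋀ Kᵏ)` the `k`-th power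
of `A = ∑ eᵢ ⊗ Xᵢ` is `(e₁ ∧ ⋯ ∧ eₖ) ⊗ s`, where `s` is the signed sum of the products of the `Xᵢ`,
so for `k ≥ 2 * n` it suffices that `A ^ (2 * n) = 0`. The entries of `A` anticommute, so those of
`A ^ 2` commute with each other, and moving one factor of `A ^ (2 * m)` cyclically around the trace
changes its sign, so that all powers of `A ^ 2` have trace zero. Over a torsion-free ring, Newton's
identities and Cayley–Hamilton then give `(A ^ 2) ^ n = 0`. An arbitrary commutative ring is a
quotient of a polynomial ring over `ℤ`, which is torsion-free.
-/

open scoped TensorProduct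

section StandardPolynomial

/-- The standard polynomial `s_k(x₁, …, xₖ) = ∑ σ, sign σ • x_{σ(1)} ⋯ x_{σ(k)}`, evaluated in a
ring `A` and bundled as an alternating map. Amitsur–Levitsky says that it vanishes on matrices. -/
noncomputable def standardPolynomial (A : Type*) [Ring A] (k : ℕ) : A [⋀^Fin k]→ₗ[ℤ] A :=
  MultilinearMap.alternatization (MultilinearMap.mkPiAlgebraFin ℤ k A)

variable {A B : Type*} [Ring A] [Ring B] {k : ℕ}

theorem standardPolynomial_apply (x : Fin k → A) :
    standardPolynomial A k x =
      ∑ σ : Equiv.Perm (Fin k), Equiv.Perm.sign σ • (List.ofFn fun i => x (σ i)).prod :=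
  MultilinearMap.alternatization_apply _ _

theorem map_standardPolynomial (φ : A →+* B) (x : Fin k → A) :
    φ (standardPolynomial A k x) = standardPolynomial B k (φ ∘ x) := by
  simp [standardPolynomial_apply, Units.smul_def, map_list_prod, List.map_ofFn,
    Function.comp_def]

end StandardPolynomial

section Newton

open Polynomial

variable {n : Type*} [Fintype n] [DecidableEq n]

theorem derivation_prod {R A M ι : Type*} [CommSemiring R] [CommSemiring A] [AddCommMonoid M]
    [Algebra R A] [Module A M] [Module R M] [DecidableEq ι] (D : Derivation R A M)
    (s : Finset ι) (f : ι → A) :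
    D (∏ i ∈ s, f i) = ∑ i ∈ s, (∏ j ∈ s.erase i, f j) • D (f i) := by
  induction s using Finset.induction_on with
  | empty => simp
  | insert a s ha ih =>
    rw [Finset.prod_insert ha, D.leibniz, ih, Finset.sum_insert ha, Finset.erase_insert ha,
      add_comm, Finset.smul_sum]
    congr 1
    refine Finset.sum_congr rfl fun i hi => ?_
    have hai : a ≠ i := fun h => ha (h ▸ hi)
    rw [Finset.erase_insert_of_ne hai,
      Finset.prod_insert fun h => ha (Finset.mem_of_mem_erase h), mul_smul]

theorem adjugate_mul_apply_self {A : Type*} [CommRing A] (M N : Matrix n n A) (i : n) :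
    (M.adjugate * N) i i = (M.updateCol i fun k => N k i).det := by
  rw [← Matrix.cramer_apply, Matrix.cramer_eq_adjugate_mulVec]
  rfl

theorem derivation_det {R A : Type*} [CommSemiring R] [CommRing A] [Algebra R A]
    (D : Derivation R A A) (M : Matrix n n A) :
    D M.det = (M.adjugate * M.map D).trace := by
  simp only [Matrix.trace, Matrix.diag_apply, adjugate_mul_apply_self, Matrix.det_apply, map_sum]
  rw [Finset.sum_comm]
  refine Finset.sum_congr rfl fun σ _ => ?_
  rw [← Finset.smul_sum, Units.smul_def, Units.smul_def, map_zsmul, derivation_prod]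
  congr 1
  refine Finset.sum_congr rfl fun i _ => ?_
  rw [← Finset.prod_erase_mul _ _ (Finset.mem_univ i), Matrix.updateCol_self, smul_eq_mul,
    Matrix.map_apply]
  congr 1
  refine Finset.prod_congr rfl fun j hj => ?_
  rw [Matrix.updateCol_ne (Finset.ne_of_mem_erase hj)]

variable {R : Type*} [CommRing R]

theorem derivative_charpolyRev (B : Matrix n n R) :
    derivative B.charpolyRev =
      -((1 - (X : R[X]) • B.map C).adjugate * B.map C).trace := by
  have hmap : (1 - (X : R[X]) • B.map C).map derivative' = -B.map C := by
    ext1 i j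
    by_cases h : i = j <;> simp [h]
  rw [Matrix.charpolyRev, ← derivative'_apply, derivation_det, hmap, mul_neg, Matrix.trace_neg]

/-- Newton's identities, packaged as the power series congruence
`-q' ≡ q * ∑ j, tr (B ^ (j + 1)) X ^ j` modulo `X ^ k` for `q = det (1 - X B)`. -/
theorem X_pow_dvd_derivative_charpolyRev_add (B : Matrix n n R) (k : ℕ) :
    X ^ k ∣ derivative B.charpolyRev +
      B.charpolyRev * ∑ j ∈ Finset.range k, C (B ^ (j + 1)).trace * X ^ j := by
  set N : Matrix n n R[X] := B.map C
  set P : Matrix n n R[X] := 1 - (X : R[X]) • N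
  have hN (j : ℕ) : (N ^ (j + 1)).trace = C (B ^ (j + 1)).trace := by
    rw [AddMonoidHom.map_trace, ← Matrix.map_pow]
  have hgeom : P.adjugate = B.charpolyRev • ∑ j ∈ Finset.range k, ((X : R[X]) • N) ^ j
      + P.adjugate * ((X : R[X]) • N) ^ k := by
    have h : P * ∑ j ∈ Finset.range k, ((X : R[X]) • N) ^ j = 1 - ((X : R[X]) • N) ^ k :=
      mul_neg_geom_sum _ k
    rw [← sub_eq_iff_eq_add, ← mul_one_sub, ← h, ← mul_assoc, Matrix.adjugate_mul, smul_one_mul]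
    rfl
  have htrace : (P.adjugate * N).trace =
      B.charpolyRev * ∑ j ∈ Finset.range k, C (B ^ (j + 1)).trace * X ^ j +
        X ^ k * (P.adjugate * N ^ (k + 1)).trace := by
    conv_lhs => rw [hgeom]
    simp only [add_mul, smul_mul_assoc, Finset.sum_mul, mul_assoc, mul_smul_comm, _root_.smul_pow,
      ← pow_succ, Matrix.trace_add, Matrix.trace_smul, Matrix.trace_sum, hN, smul_eq_mul,
      mul_comm (X ^ _) (C _)]
  rw [derivative_charpolyRev, htrace]
  exact ⟨-(P.adjugate * N ^ (k + 1)).trace, by ring⟩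

theorem charpolyRev_eq_one_of_trace_pow_eq_zero [IsAddTorsionFree R] {B : Matrix n n R}
    (h : ∀ k, (B ^ (k + 1)).trace = 0) : B.charpolyRev = 1 := by
  have hderiv : derivative B.charpolyRev = 0 := by
    ext k
    have hdvd : X ^ (k + 1) ∣ derivative B.charpolyRev := by
      simpa [h] using X_pow_dvd_derivative_charpolyRev_add B (k + 1)
    exact X_pow_dvd_iff.mp hdvd k k.lt_succ_self
  rw [eq_C_of_natDegree_eq_zero (derivative_eq_zero.mp hderiv),
    coeff_zero_eq_eval_zero, Matrix.eval_charpolyRev, C_1]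

theorem matrix_pow_card_eq_zero_of_trace_pow_eq_zero [IsAddTorsionFree R] {B : Matrix n n R}
    (h : ∀ k, (B ^ (k + 1)).trace = 0) : B ^ Fintype.card n = 0 := by
  nontriviality R
  have hreflect : B.charpoly.reflect (Fintype.card n) = 1 := by
    rw [← charpolyRev_eq_one_of_trace_pow_eq_zero h, ← Matrix.reverse_charpoly, reverse,
      B.charpoly_natDegree_eq_dim]
  have hcharpoly : B.charpoly = X ^ Fintype.card n := by
    rw [← reflect_reflect (N := Fintype.card n) (p := B.charpoly), hreflect, reflect_one]
  simpa [hcharpoly] using B.aeval_self_charpoly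

end Newton

/-- Any two entries of `A` anticommute, where the two may be the same entry, so that `2 a² = 0` for
each entry `a`. Matrices of one-forms are the example in which this is used. -/
def HasAnticommutingEntries {m n E : Type*} [Mul E] [Neg E] (A : Matrix m n E) : Prop :=
  ∀ i j k l, A i j * A k l = -(A k l * A i j)

section NoncommutativeEntries

variable {n E : Type*} [Fintype n] [DecidableEq n] [Ring E] {A : Matrix n n E}

open scoped IsMulCommutative in
theorem matrix_pow_card_eq_zero_of_commute_of_trace_pow_eq_zero [IsAddTorsionFree E]
    (hcomm : ∀ i j k l, Commute (A i j) (A k l)) (h : ∀ k, (A ^ (k + 1)).trace = 0) :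
    A ^ Fintype.card n = 0 := by
  let S : Subring E := Subring.closure (Set.range fun p : n × n => A p.1 p.2)
  have : IsMulCommutative S := Subring.isMulCommutative_closure <| by
    rintro _ ⟨p, rfl⟩ _ ⟨q, rfl⟩
    exact hcomm ..
  have : IsAddTorsionFree S := Subtype.val_injective.isAddTorsionFree S.subtype.toAddMonoidHom
  let B : Matrix n n S := .of fun i j => ⟨A i j, Subring.subset_closure ⟨(i, j), rfl⟩⟩
  have hpow (k : ℕ) : S.subtype.mapMatrix (B ^ k) = A ^ k := map_pow S.subtype.mapMatrix B k
  have htrace (k : ℕ) : (B ^ (k + 1)).trace = 0 := Subtype.val_injective <| by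
    rw [ZeroMemClass.coe_zero, ← h k, ← hpow]
    exact AddMonoidHom.map_trace S.subtype.toAddMonoidHom _
  rw [← hpow, matrix_pow_card_eq_zero_of_trace_pow_eq_zero htrace, map_zero]

namespace HasAnticommutingEntries

theorem semiconjBy_pow_apply (hA : HasAnticommutingEntries A) (m : ℕ) (i j k l : n) :
    SemiconjBy (A i j) ((A ^ m) k l) (((-A) ^ m) k l) := by
  have h : SemiconjBy (Matrix.scalar n (A i j)) A (-A) := by
    ext k l
    simpa using hA i j k l
  simpa [SemiconjBy] using congrFun₂ (h.pow_right m).eq k l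

theorem commute_sq_apply (hA : HasAnticommutingEntries A) (i j k l : n) :
    Commute ((A ^ 2) i j) ((A ^ 2) k l) := by
  have h (r s : n) : Commute (A r s) ((A ^ 2) k l) := by
    simpa [Commute] using hA.semiconjBy_pow_apply 2 r s k l
  rw [sq A, Matrix.mul_apply, ← sq]
  exact Commute.sum_left _ _ _ fun r _ => (h i r).mul_left (h r j)

theorem trace_pow_eq_zero [IsAddTorsionFree E] (hA : HasAnticommutingEntries A) {m : ℕ}
    (hm : Odd m) : (A ^ (m + 1)).trace = 0 := by
  refine self_eq_neg.mp ?_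
  calc (A ^ (m + 1)).trace
      = ∑ i, ∑ j, A i j * (A ^ m) j i := by
        simp [pow_succ', Matrix.trace, Matrix.mul_apply]
    _ = ∑ j, ∑ i, ((-A) ^ m) j i * A i j := by
        simp only [(hA.semiconjBy_pow_apply m _ _ _ _).eq]
        exact Finset.sum_comm
    _ = -(A ^ (m + 1)).trace := by
        simp [hm.neg_pow, pow_succ, Matrix.trace, Matrix.mul_apply]

theorem pow_two_mul_card_eq_zero [IsAddTorsionFree E] (hA : HasAnticommutingEntries A) :
    A ^ (2 * Fintype.card n) = 0 := by
  rw [pow_mul]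
  refine matrix_pow_card_eq_zero_of_commute_of_trace_pow_eq_zero hA.commute_sq_apply fun k => ?_
  rw [← pow_mul, mul_add_one]
  exact hA.trace_pow_eq_zero (odd_two_mul_add_one k)

end HasAnticommutingEntries

end NoncommutativeEntries

section ExteriorAlgebra

theorem sum_pow_eq_sum_prod_ofFn {S ι : Type*} [Semiring S] [Fintype ι]
    (y : ι → S) (m : ℕ) :
    (∑ i, y i) ^ m = ∑ f : Fin m → ι, (List.ofFn fun j => y (f j)).prod := by
  classical
  rw [← MultilinearMap.mkPiAlgebraFin_apply_const (R := ℕ), MultilinearMap.map_sum]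
  rfl

theorem sum_fun_eq_sum_perm {ι M : Type*} [Fintype ι] [DecidableEq ι] [AddCommMonoid M]
    {F : (ι → ι) → M} (hF : ∀ f, ¬Function.Injective f → F f = 0) :
    ∑ f, F f = ∑ σ : Equiv.Perm ι, F σ := by
  refine (Fintype.sum_of_injective _ DFunLike.coe_injective _ F (fun f hf => hF f ?_)
    fun _ => rfl).symm
  exact fun hinj => hf ⟨.ofBijective f (Finite.injective_iff_bijective.mp hinj), rfl⟩

variable {K V : Type*} [CommRing K] [AddCommGroup V] [Module K V]

theorem prod_ofFn_tmul {A B : Type*} [Semiring A] [Algebra K A] [Semiring B] [Algebra K B]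
    {m : ℕ} (a : Fin m → A) (b : Fin m → B) :
    (List.ofFn fun i => a i ⊗ₜ[K] b i).prod = (List.ofFn a).prod ⊗ₜ[K] (List.ofFn b).prod := by
  induction m with
  | zero => rfl
  | succ m ih => simp [List.ofFn_succ, ih]

theorem sum_ι_tmul_pow {A : Type*} [Ring A] [Algebra K A] {k : ℕ}
    (e : Fin k → V) (x : Fin k → A) :
    (∑ i, ExteriorAlgebra.ι K (e i) ⊗ₜ[K] x i) ^ k =
      ExteriorAlgebra.ιMulti K k e ⊗ₜ[K] standardPolynomial A k x := by
  have hnoninj (f : Fin k → Fin k) (hf : ¬Function.Injective f) :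
      ExteriorAlgebra.ιMulti K k (e ∘ f) ⊗ₜ[K] (List.ofFn (x ∘ f)).prod = 0 := by
    rw [AlternatingMap.map_eq_zero_of_not_injective _ _ fun h => hf h.of_comp,
      TensorProduct.zero_tmul]
  calc (∑ i, ExteriorAlgebra.ι K (e i) ⊗ₜ[K] x i) ^ k
      = ∑ f : Fin k → Fin k,
          ExteriorAlgebra.ιMulti K k (e ∘ f) ⊗ₜ[K] (List.ofFn (x ∘ f)).prod := by
        simp only [sum_pow_eq_sum_prod_ofFn, prod_ofFn_tmul, ExteriorAlgebra.ιMulti_apply,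
          Function.comp_def]
    _ = ∑ σ : Equiv.Perm (Fin k),
          ExteriorAlgebra.ιMulti K k (e ∘ σ) ⊗ₜ[K] (List.ofFn (x ∘ σ)).prod :=
        sum_fun_eq_sum_perm hnoninj
    _ = ExteriorAlgebra.ιMulti K k e ⊗ₜ[K] standardPolynomial A k x := by
        simp only [AlternatingMap.map_perm, standardPolynomial_apply, TensorProduct.tmul_sum,
          Units.smul_def, TensorProduct.smul_tmul]
        rfl

theorem standardPolynomial_eq_zero_of_sum_ι_tmul_pow_eq_zero {A : Type*} [Ring A] [Algebra K A]
    {k : ℕ} {x : Fin k → A}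
    (h : (∑ i, ExteriorAlgebra.ι K (Pi.single i 1 : Fin k → K) ⊗ₜ[K] x i) ^ k = 0) :
    standardPolynomial A k x = 0 := by
  let vol : ExteriorAlgebra K (Fin k → K) →ₗ[K] K :=
    ExteriorAlgebra.liftAlternating (Pi.single k Matrix.detRowAlternating)
  have hvol : vol (ExteriorAlgebra.ιMulti K k fun i => Pi.single i 1) = 1 := by
    rw [ExteriorAlgebra.liftAlternating_apply_ιMulti, Pi.single_eq_same]
    have hone : (Matrix.of fun i => Pi.single i 1) = (1 : Matrix (Fin k) (Fin k) K) :=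
      Matrix.ext fun _ _ => Matrix.one_eq_pi_single.symm
    exact (congrArg Matrix.det hone).trans Matrix.det_one
  rw [sum_ι_tmul_pow] at h
  simpa [hvol] using congrArg (TensorProduct.lid K A ∘ vol.rTensor A) h

theorem hasAnticommutingEntries_map_ι {m n : Type*} (M : Matrix m n V) :
    HasAnticommutingEntries (M.map (ExteriorAlgebra.ι K)) :=
  fun _ _ _ _ => eq_neg_of_add_eq_zero_left (ExteriorAlgebra.ι_add_mul_swap _ _)

theorem matrixEquivTensor_symm_sum_ι_tmul {n ι : Type*} [Fintype n] [DecidableEq n] [Fintype ι]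
    (e : ι → V) (X : ι → Matrix n n K) :
    (matrixEquivTensor n K (ExteriorAlgebra K V)).symm (∑ i, ExteriorAlgebra.ι K (e i) ⊗ₜ X i) =
      (Matrix.of fun p q => ∑ i, X i p q • e i).map (ExteriorAlgebra.ι K) := by
  ext p q
  simp [Matrix.sum_apply, Algebra.smul_def, Algebra.commutes]

theorem sum_ι_tmul_matrix_pow_eq_zero [IsAddTorsionFree (ExteriorAlgebra K V)]
    {n ι : Type*} [Fintype n] [DecidableEq n] [Fintype ι] (e : ι → V) (X : ι → Matrix n n K) :
    (∑ i, ExteriorAlgebra.ι K (e i) ⊗ₜ[K] X i) ^ (2 * Fintype.card n) = 0 := by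
  apply (matrixEquivTensor n K (ExteriorAlgebra K V)).symm.injective
  rw [map_pow, matrixEquivTensor_symm_sum_ι_tmul, map_zero]
  exact (hasAnticommutingEntries_map_ι _).pow_two_mul_card_eq_zero

theorem isAddTorsionFree_exteriorAlgebra [IsAddTorsionFree K] {I : Type*} [LinearOrder I]
    (b : Module.Basis I K V) : IsAddTorsionFree (ExteriorAlgebra K V) :=
  b.ExteriorAlgebra.repr.injective.isAddTorsionFree b.ExteriorAlgebra.repr.toAddMonoidHom

end ExteriorAlgebra

section AmitsurLevitsky

variable {n R : Type*} [Fintype n] [DecidableEq n] [CommRing R] {k : ℕ}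

theorem standardPolynomial_matrix_eq_zero_of_isAddTorsionFree [IsAddTorsionFree R]
    (hk : 2 * Fintype.card n ≤ k) (X : Fin k → Matrix n n R) :
    standardPolynomial (Matrix n n R) k X = 0 := by
  have := isAddTorsionFree_exteriorAlgebra (Pi.basisFun R (Fin k))
  exact standardPolynomial_eq_zero_of_sum_ι_tmul_pow_eq_zero
    (pow_eq_zero_of_le hk (sum_ι_tmul_matrix_pow_eq_zero _ X))

theorem amitsur_levitsky_general (hk : 2 * Fintype.card n ≤ k) (X : Fin k → Matrix n n R) :
    standardPolynomial (Matrix n n R) k X = 0 := by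
  let φ : MvPolynomial R ℤ →+* R := MvPolynomial.eval₂Hom (Int.castRingHom R) id
  let Y (i : Fin k) : Matrix n n (MvPolynomial R ℤ) := (X i).map MvPolynomial.X
  have hY : φ.mapMatrix ∘ Y = X := by
    ext i p q
    simp [φ, Y]
  rw [← hY, ← map_standardPolynomial, standardPolynomial_matrix_eq_zero_of_isAddTorsionFree hk,
    map_zero]

end AmitsurLevitsky

/-- **Amitsur–Levitsky theorem.** For any `2d` matrices of size `d × d` over a commutative
ring `R`, the signed sum over all permutations `σ` of the ordered products
`X (σ 0) * X (σ 1) * ⋯ * X (σ (2d-1))` vanishes. -/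
theorem amitsur_levitsky
    (R : Type*) [CommRing R] (d : ℕ) (hd : 1 ≤ d)
    (X : Fin (2 * d) → Matrix (Fin d) (Fin d) R) :
    ∑ σ : Equiv.Perm (Fin (2 * d)),
      (Equiv.Perm.sign σ : ℤ) • ((List.finRange (2 * d)).map (fun i => X (σ i))).prod = 0 := by
  simpa only [standardPolynomial_apply, List.ofFn_eq_map, Units.smul_def] using
    amitsur_levitsky_general (by rw [Fintype.card_fin]) X
end

section
/- Let Σ be a finite alphabet, let d ≥ 1, let N ≥ 0, and let c be a real-valued coefficient function on the (finitely many) words over Σ of length at most N. Define, for an assignment X of d×d real matrices to the letters of Σ, the matrix F(X) = Σ_w c(w) · ∏X(w), where the sum ranges over all words w over Σ of length at most N. Suppose there exists ε > 0 such that F(X) = 0 for every assignment X in which every entry of every matrix X(a), a ∈ Σ, has absolute value less than ε. Then for every n with 0 ≤ n ≤ N and every assignment X of d×d real matrices to the letters of Σ (with no restriction on norms), the homogeneous degree-n component Σ_{|w| = n} c(w) · ∏X(w) equals the zero matrix. -/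
/-!
Scaling an assignment `X` by `t` multiplies the product of a word of length `k` by `t ^ k`, so
`F (t • X)` is a polynomial in `t` whose coefficients are the homogeneous components of `F` at `X`.
For fixed `X` this polynomial vanishes for all `t` near `0`, in particular at infinitely many `t`,
so its coefficients vanish.
-/

open Filter Topology

theorem eq_zero_of_infinite_sum_pow_smul_eq_zero {R M : Type*} [CommRing R] [IsDomain R]
    [AddCommMonoid M] [Module R M] [Module.Projective R M]
    {T : Set R} (hT : T.Infinite) {s : Finset ℕ} {v : ℕ → M}
    (hv : ∀ t ∈ T, ∑ k ∈ s, t ^ k • v k = 0) {n : ℕ} (hn : n ∈ s) : v n = 0 := by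
  refine (Module.forall_dual_apply_eq_zero_iff R (v n)).mp fun φ ↦ ?_
  let p : Polynomial R := ∑ k ∈ s, Polynomial.monomial k (φ (v k))
  have hroot : ∀ t ∈ T, p.IsRoot t := fun t ht ↦ by
    simpa [p, Polynomial.IsRoot, Polynomial.eval_finsetSum, mul_comm] using congrArg φ (hv t ht)
  have hp : p = 0 := p.eq_zero_of_infinite_isRoot (hT.mono hroot)
  have hcoeff : p.coeff n = φ (v n) := by
    simp [p, Polynomial.coeff_monomial, hn]
  rw [← hcoeff, hp, Polynomial.coeff_zero]

theorem prod_map_smul_eq_pow_length_smul {α M A : Type*} [Monoid M] [Monoid A] [MulAction M A]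
    [IsScalarTower M A A] [SMulCommClass M A A] (t : M) (X : α → A) (w : List α) :
    (w.map (t • X)).prod = t ^ w.length • (w.map X).prod := by
  simpa [Function.comp_def, Pi.smul_def] using (List.smul_prod (w.map X) t).symm

theorem sum_smul_prod_map_smul_eq_sum_pow_smul {α R A : Type*} [CommSemiring R] [Semiring A]
    [Algebra R A] (c : List α → R) (t : R) (X : α → A)
    {s : Finset (List α)} {T : Finset ℕ} (hT : ∀ w ∈ s, w.length ∈ T) :
    ∑ w ∈ s, c w • (w.map (t • X)).prod =
      ∑ k ∈ T, t ^ k • ∑ w ∈ s with w.length = k, c w • (w.map X).prod := by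
  rw [← Finset.sum_fiberwise_of_maps_to hT]
  refine Finset.sum_congr rfl fun k _ ↦ ?_
  rw [Finset.smul_sum]
  refine Finset.sum_congr rfl fun w hw ↦ ?_
  rw [prod_map_smul_eq_pow_length_smul, (Finset.mem_filter.mp hw).2, smul_comm]

theorem eventually_nhds_zero_forall_abs_entry_lt {α m n R : Type*} [Finite α] [Finite m] [Finite n]
    [AddCommGroup R] [LinearOrder R] [IsOrderedAddMonoid R] [TopologicalSpace R] [OrderTopology R]
    {ε : R} (hε : 0 < ε) :
    ∀ᶠ X in 𝓝 (0 : α → Matrix m n R), ∀ a i j, |X a i j| < ε := by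
  simp only [eventually_all]
  intro a i j
  have hentry : Continuous fun X : α → Matrix m n R ↦ X a i j :=
    (continuous_apply a).matrix_elem i j
  have habs : ∀ᶠ x in 𝓝 (0 : R), |x| < ε := by simpa using eventually_abs_sub_lt 0 hε
  exact hentry.tendsto 0 habs

theorem homogeneous_components_vanish_general {α 𝕜 A : Type*} [NontriviallyNormedField 𝕜]
    [Ring A] [Algebra 𝕜 A] [TopologicalSpace A] [ContinuousSMul 𝕜 A]
    {S : Set (List α)} (hS : S.Finite) {c : List α → 𝕜}
    (h : ∀ᶠ X in 𝓝 (0 : α → A), ∑ᶠ w ∈ S, c w • (w.map X).prod = 0) (n : ℕ) (X : α → A) :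
    ∑ᶠ w ∈ {w ∈ S | w.length = n}, c w • (w.map X).prod = 0 := by
  lift S to Finset (List α) using hS
  have hscale : Tendsto (fun t : 𝕜 ↦ t • X) (𝓝 0) (𝓝 0) :=
    (continuous_id.smul continuous_const).tendsto' 0 0 (zero_smul 𝕜 X)
  have hinf : {t : 𝕜 | ∑ᶠ w ∈ (S : Set (List α)), c w • (w.map (t • X)).prod = 0}.Infinite :=
    infinite_of_mem_nhds 0 (hscale.eventually h)
  have hdegree : ∀ w ∈ S, w.length ∈ insert n (S.image List.length) := fun w hw ↦
    Finset.mem_insert_of_mem (Finset.mem_image_of_mem _ hw)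
  have hcomponent : ∑ w ∈ S with w.length = n, c w • (w.map X).prod = 0 := by
    refine eq_zero_of_infinite_sum_pow_smul_eq_zero
      (v := fun k ↦ ∑ w ∈ S with w.length = k, c w • (w.map X).prod) hinf (fun t ht ↦ ?_)
      (Finset.mem_insert_self n (S.image List.length))
    rw [← sum_smul_prod_map_smul_eq_sum_pow_smul c t X hdegree, ← finsum_mem_coe_finset]
    exact ht
  simpa only [← finsum_mem_coe_finset, Finset.coe_filter, Finset.mem_coe] using hcomponent

/-- **Theorem (splitting by degree / homogeneity argument).** Let `c` assign real
coefficients to words over a finite alphabet, and suppose the finite sum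
`F(X) = Σ_{|w| ≤ N} c w • ∏ X(w)` vanishes for every assignment `X` of `d × d` real
matrices all of whose entries have absolute value less than some `ε > 0`.  Then every
homogeneous component `Σ_{|w| = n} c w • ∏ X(w)` (for `n ≤ N`) vanishes for *all*
assignments of `d × d` real matrices. -/
theorem homogeneous_components_vanish
    {α : Type*} [Fintype α] (d N : ℕ) (hd : 1 ≤ d)
    (c : List α → ℝ)
    (h : ∃ ε > (0 : ℝ), ∀ X : α → Matrix (Fin d) (Fin d) ℝ,
      (∀ (a : α) (i j : Fin d), |X a i j| < ε) →
      (∑ᶠ w ∈ {w : List α | w.length ≤ N}, c w • (w.map X).prod) = 0) :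
    ∀ n ≤ N, ∀ X : α → Matrix (Fin d) (Fin d) ℝ,
      (∑ᶠ w ∈ {w : List α | w.length = n}, c w • (w.map X).prod) = 0 := by
  obtain ⟨ε, hε, h⟩ := h
  intro n hn X
  have hlength : {w : List α | w.length ≤ N ∧ w.length = n} = {w | w.length = n} :=
    Set.ext fun w ↦ and_iff_right_of_imp fun hw ↦ hw.trans_le hn
  rw [← hlength]
  exact homogeneous_components_vanish_general (List.finite_length_le α N)
    ((eventually_nhds_zero_forall_abs_entry_lt hε).mono h) n X
end

section
/- Let k ≥ 1, let ε > 0, and let c : (Fin k → ℕ) → ℝ be a coefficient function. Suppose that for every x : Fin k → ℝ with |x(i)| < ε for all i, the family (c(f) · ∏_{i} x(i)^{f(i)})_{f : Fin k → ℕ} is absolutely summable and its sum is 0. Then c(f) = 0 for every f : Fin k → ℕ. -/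
/-!
The proof goes by induction on the number of variables. Fixing all variables but the first and
collecting the terms by powers of the first one gives a one-variable power series that vanishes
near `0`, so by the one-variable identity theorem each of its coefficients vanishes; these
coefficients are themselves power series in the remaining variables. Their convergence comes from
restricting the full series to one power of the first variable and dividing by that power, at a
single nonzero value of the variable.
-/

open Filter Topology

section IdentityPrinciple

variable {𝕜 E : Type*} [NontriviallyNormedField 𝕜] [NormedAddCommGroup E] [NormedSpace 𝕜 E]

theorem eq_zero_of_eventually_hasSum_pow_smul {a : ℕ → E}
    (h : ∀ᶠ t in 𝓝 (0 : 𝕜), HasSum (fun n ↦ t ^ n • a n) 0) : a = 0 := by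
  let p : FormalMultilinearSeries 𝕜 𝕜 E :=
    fun n ↦ ContinuousMultilinearMap.mkPiRing 𝕜 (Fin n) (a n)
  have coeff_p (n : ℕ) : p.coeff n = a n := by simp [p, FormalMultilinearSeries.coeff]
  have hp : HasFPowerSeriesAt (0 : 𝕜 → E) p 0 := by
    simpa [hasFPowerSeriesAt_iff, coeff_p] using h
  funext n
  rw [← coeff_p n, hp.eq_zero]
  rfl

variable [CompleteSpace E]

theorem hasSum_zero_of_eventually_hasSum_pow_smul {β : Type*} {u : ℕ → β → E}
    (h : ∀ᶠ t in 𝓝 (0 : 𝕜), HasSum (fun q : ℕ × β ↦ t ^ q.1 • u q.1 q.2) 0) (n : ℕ) :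
    HasSum (u n) 0 := by
  obtain ⟨t₀, ht₀, ht₀_ne⟩ :=
    ((h.filter_mono nhdsWithin_le_nhds).and (eventually_mem_nhdsWithin (s := {0}ᶜ))).exists
  have summable_u (m : ℕ) : Summable (u m) :=
    ((ht₀.summable.prod_factor m).const_smul (t₀ ^ m)⁻¹).congr fun b ↦
      inv_smul_smul₀ (pow_ne_zero m ht₀_ne) (u m b)
  have tsum_u : (fun m ↦ ∑' b, u m b) = 0 := eq_zero_of_eventually_hasSum_pow_smul <|
    h.mono fun t ht ↦ ht.prod_fiberwise fun m ↦ (summable_u m).hasSum.const_smul (t ^ m)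
  exact (summable_u n).hasSum_iff.2 (congrFun tsum_u n)

theorem eventually_hasSum_prod_pow_smul_cons {k : ℕ} {c : (Fin (k + 1) → ℕ) → E}
    (h : ∀ᶠ x in 𝓝 (0 : Fin (k + 1) → 𝕜), HasSum (fun f ↦ (∏ i, x i ^ f i) • c f) 0) (n : ℕ) :
    ∀ᶠ x in 𝓝 (0 : Fin k → 𝕜), HasSum (fun g ↦ (∏ i, x i ^ g i) • c (Fin.cons n g)) 0 := by
  have tendsto_cons : Tendsto (fun z : (Fin k → 𝕜) × 𝕜 ↦ (Fin.cons z.2 z.1 : Fin (k + 1) → 𝕜))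
      (𝓝 0 ×ˢ 𝓝 0) (𝓝 0) := by
    rw [← nhds_prod_eq]
    exact Continuous.tendsto' (by fun_prop) _ _ (Matrix.cons_zero_zero)
  filter_upwards [(tendsto_cons.eventually h).curry] with x hx
  refine hasSum_zero_of_eventually_hasSum_pow_smul (𝕜 := 𝕜)
    (u := fun m g ↦ (∏ i, x i ^ g i) • c (Fin.cons m g)) (hx.mono fun t ht ↦ ?_) n
  rw [← (Fin.consEquiv fun _ ↦ ℕ).hasSum_iff] at ht
  simpa [Function.comp_def, Fin.consEquiv, Fin.prod_univ_succ, mul_smul] using ht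

theorem eq_zero_of_eventually_hasSum_prod_pow_smul_fin {k : ℕ} {c : (Fin k → ℕ) → E}
    (h : ∀ᶠ x in 𝓝 (0 : Fin k → 𝕜), HasSum (fun f ↦ (∏ i, x i ^ f i) • c f) 0) : c = 0 := by
  induction k with
  | zero =>
    funext f
    have hasSum_c : HasSum c 0 := by simpa using h.self_of_nhds
    exact (congrArg c (Subsingleton.elim f _)).trans ((hasSum_unique c).unique hasSum_c)
  | succ k ih =>
    funext f
    rw [← Fin.cons_self_tail f]
    exact congrFun (ih (eventually_hasSum_prod_pow_smul_cons h (f 0))) (Fin.tail f)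

theorem power_series_identity_principle_general {ι : Type*} [Fintype ι] {c : (ι → ℕ) → E}
    (h : ∀ᶠ x in 𝓝 (0 : ι → 𝕜), HasSum (fun f ↦ (∏ i, x i ^ f i) • c f) 0) : c = 0 := by
  let e := Fintype.equivFin ι
  let reindex : (Fin (Fintype.card ι) → ℕ) ≃ (ι → ℕ) := e.symm.arrowCongr (Equiv.refl ℕ)
  have tendsto_comp : Tendsto (fun x : Fin (Fintype.card ι) → 𝕜 ↦ x ∘ e) (𝓝 0) (𝓝 0) :=
    Continuous.tendsto' (by fun_prop) _ _ rfl
  have comp_reindex_eq_zero : c ∘ reindex = 0 := by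
    refine eq_zero_of_eventually_hasSum_prod_pow_smul_fin (𝕜 := 𝕜) ?_
    filter_upwards [tendsto_comp.eventually h] with x hx
    rw [← reindex.hasSum_iff] at hx
    convert hx using 2 with g
    exact congrArg (· • c (reindex g)) (e.prod_comp fun j ↦ x j ^ g j).symm
  exact reindex.surjective.injective_comp_right comp_reindex_eq_zero

end IdentityPrinciple

/-- **Theorem (identity principle for real power series in several variables).**
If for every `x : Fin k → ℝ` with all `|x i| < ε` the family
`f ↦ c f * ∏ i, (x i)^(f i)` (indexed by multi-indices `f : Fin k → ℕ`) is absolutely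
summable with sum `0`, then all coefficients `c f` vanish. -/
theorem power_series_identity_principle
    (k : ℕ) (hk : 1 ≤ k) (ε : ℝ) (hε : 0 < ε) (c : (Fin k → ℕ) → ℝ)
    (h : ∀ x : Fin k → ℝ, (∀ i : Fin k, |x i| < ε) →
      (Summable fun f : Fin k → ℕ => |c f * ∏ i : Fin k, x i ^ f i|) ∧
      (∑' f : Fin k → ℕ, c f * ∏ i : Fin k, x i ^ f i) = 0) :
    ∀ f : Fin k → ℕ, c f = 0 := by
  refine congrFun (power_series_identity_principle_general (𝕜 := ℝ) ?_)
  filter_upwards [Metric.ball_mem_nhds 0 hε] with x hx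
  obtain ⟨summable_abs, tsum_eq⟩ :=
    h x fun i ↦ (norm_le_pi_norm x i).trans_lt (mem_ball_zero_iff.1 hx)
  simpa only [smul_eq_mul, mul_comm, tsum_eq] using summable_abs.of_abs.hasSum
end
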